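/- Let L > 0. There exist λ ∈ ℂ and three times continuously differentiable functions θ, u : [0,L] → ℂ, not both identically zero, satisfying −u′(x) − u‴(x) = λ·θ(x) and −θ′(x) − θ‴(x) = λ·u(x) for all x ∈ [0,L], with boundary conditions θ(0) = θ(L) = θ′(0) = θ″(L) = 0 and u(0) = u(L) = u′(L) = 0, if and only if L ∈ 𝒩 ∪ ℛ. -/

import Mathlib

open Set

/-- The set 𝒩 = { (2π/√3)·√(k² + k·l + l²) : k, l positive integers }. -/
def criticalN : Set ℝ :=
  {x | ∃ k l : ℕ, 0 < k ∧ 0 < l ∧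
    x = (2 * Real.pi / Real.sqrt 3) * Real.sqrt ((k : ℝ)^2 + (k : ℝ) * (l : ℝ) + (l : ℝ)^2)}

/-- The set ℛ = { π·√((1/2+2k)² + (1/2+2l)² + (1/2+2k)(1/2+2l)) : k, l ∈ ℤ, k ≠ l }. -/
def criticalR : Set ℝ :=
  {x | ∃ k l : ℤ, k ≠ l ∧
    x = Real.pi * Real.sqrt ((1/2 + 2*(k : ℝ))^2 + (1/2 + 2*(l : ℝ))^2
      + (1/2 + 2*(k : ℝ)) * (1/2 + 2*(l : ℝ)))}

/-- The set 𝒩₃ = { (2π/√3)·√(k² + k·l + l²) : k, l positive integers, 3 ∣ 2k + l }. -/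
def criticalN3 : Set ℝ :=
  {x | ∃ k l : ℕ, 0 < k ∧ 0 < l ∧ 3 ∣ 2 * k + l ∧
    x = (2 * Real.pi / Real.sqrt 3) * Real.sqrt ((k : ℝ)^2 + (k : ℝ) * (l : ℝ) + (l : ℝ)^2)}

/-!
After reflecting `x ↦ L - x`, both `v = θ + u` and `z = (θ - u) (L - ·)` solve
`y''' + y' + λ y = 0` and vanish at both ends, and the remaining boundary conditions read
`v' L = -z' 0`, `z' L = v' 0`, `v'' L = -z'' 0`. The bilinear concomitant of `v` and `z` then forces
`v' 0 = ε z' 0` with `ε² = -1`. So either `v - ε z` is a solution whose value and derivative vanish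
at both ends, or the whole `2`-jet of `v` is multiplied by `ε` from `0` to `L`. In both cases a
nonzero `2`-jet vanishing in its first entry is multiplied by a scalar `μ` from `0` to `L`; pairing
it with the first integrals `e ^ (-s x) (y'' + s y' + (s² + 1) y)` attached to the characteristic
roots `s` shows that `e ^ (s L) = μ` for all three roots (necessarily distinct) in the first case
and for at least two roots in the second. The roots have sum `0` and any two distinct ones satisfy
`a² + a b + b² = -1`, which turns these resonances into `L ∈ 𝒩` and `L ∈ ℛ` respectively.
-/

open Complex (exp I)
open scoped Real

section LinearCalculus

variable {f g : ℝ → ℂ}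

lemma differentiable_iterates_of_contDiff_three (hf : ContDiff ℝ 3 f) :
    Differentiable ℝ f ∧ Differentiable ℝ (deriv f) ∧ Differentiable ℝ (deriv (deriv f)) := by
  have hf' : ContDiff ℝ 2 (deriv f) := hf.deriv' (n := 2)
  exact ⟨hf.differentiable (by norm_num), hf'.differentiable (by norm_num),
    hf'.differentiable_deriv_two⟩

lemma deriv_add_const_mul (hf : Differentiable ℝ f) (hg : Differentiable ℝ g) (c : ℂ) :
    deriv (fun x => f x + c * g x) = fun x => deriv f x + c * deriv g x :=
  funext fun x => ((hf x).hasDerivAt.add ((hg x).hasDerivAt.const_mul c)).deriv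

lemma deriv_deriv_add_const_mul (hf : ContDiff ℝ 3 f) (hg : ContDiff ℝ 3 g) (c : ℂ) :
    deriv (deriv fun x => f x + c * g x) =
      fun x => deriv (deriv f) x + c * deriv (deriv g) x := by
  obtain ⟨hf₀, hf₁, -⟩ := differentiable_iterates_of_contDiff_three hf
  obtain ⟨hg₀, hg₁, -⟩ := differentiable_iterates_of_contDiff_three hg
  rw [deriv_add_const_mul hf₀ hg₀, deriv_add_const_mul hf₁ hg₁]

lemma deriv_reflect (f : ℝ → ℂ) (a : ℝ) :
    deriv (fun x => f (a - x)) = fun x => -deriv f (a - x) :=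
  funext fun _ => deriv_comp_const_sub ..

lemma deriv_deriv_reflect (f : ℝ → ℂ) (a : ℝ) :
    deriv (deriv fun x => f (a - x)) = fun x => deriv (deriv f) (a - x) := by
  funext x
  rw [deriv_reflect, deriv.fun_neg, deriv_comp_const_sub, neg_neg]

lemma hasDerivAt_exp_const_mul (s : ℂ) (x : ℝ) :
    HasDerivAt (fun t : ℝ => exp (s * t)) (exp (s * x) * s) x := by
  have hlin : HasDerivAt (fun t : ℝ => s * t) (s * 1) x :=
    (Complex.ofRealCLM.hasDerivAt (x := x)).const_mul s
  simpa only [mul_one] using hlin.cexp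

lemma eq_exp_mul_of_hasDerivAt_mul {s : ℂ} {a b : ℝ} (hab : a ≤ b)
    (hf : ∀ x ∈ Icc a b, HasDerivAt f (s * f x) x) : f b = exp (s * (b - a)) * f a := by
  have hconst : ∀ x ∈ Icc a b, HasDerivAt (fun t : ℝ => exp (-s * t) * f t) 0 x := by
    intro x hx
    exact ((hasDerivAt_exp_const_mul (-s) x).mul (hf x hx)).congr_deriv (by ring)
  have hends := constant_of_has_deriv_right_zero
    (fun x hx => (hconst x hx).continuousAt.continuousWithinAt)
    (fun x hx => (hconst x (Ico_subset_Icc_self hx)).hasDerivWithinAt) b (right_mem_Icc.2 hab)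
  calc f b = exp (s * b) * (exp (-s * b) * f b) := by
        rw [← mul_assoc, ← Complex.exp_add, ← add_mul, add_neg_cancel, zero_mul,
          Complex.exp_zero, one_mul]
    _ = exp (s * (b - a)) * f a := by
        rw [hends, ← mul_assoc, ← Complex.exp_add]
        ring_nf

lemma eqOn_deriv_zero_of_eqOn_zero {a b : ℝ} (hab : a < b) (hf : Differentiable ℝ f)
    (h : ∀ x ∈ Icc a b, f x = 0) : ∀ x ∈ Icc a b, deriv f x = 0 := fun x hx =>
  (uniqueDiffOn_Icc hab x hx).eq_deriv _ (hf x).hasDerivAt.hasDerivWithinAt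
    ((hasDerivWithinAt_const x (Icc a b) (0 : ℂ)).congr h (h x hx))

end LinearCalculus

/-- The operator `-∂ - ∂³`, which makes the linearized Boussinesq eigenvalue system read
`kdvOp u = λ θ`, `kdvOp θ = λ u`. -/
noncomputable def kdvOp (f : ℝ → ℂ) (x : ℝ) : ℂ :=
  -deriv f x - deriv (deriv (deriv f)) x

lemma kdvOp_add_const_mul {f g : ℝ → ℂ} (hf : ContDiff ℝ 3 f) (hg : ContDiff ℝ 3 g) (c : ℂ)
    (x : ℝ) : kdvOp (fun x => f x + c * g x) x = kdvOp f x + c * kdvOp g x := by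
  obtain ⟨hf₀, -, hf₂⟩ := differentiable_iterates_of_contDiff_three hf
  obtain ⟨hg₀, -, hg₂⟩ := differentiable_iterates_of_contDiff_three hg
  rw [kdvOp, deriv_deriv_add_const_mul hf hg, deriv_add_const_mul hf₀ hg₀,
    deriv_add_const_mul hf₂ hg₂, kdvOp, kdvOp]
  ring

lemma kdvOp_reflect (f : ℝ → ℂ) (a x : ℝ) :
    kdvOp (fun x => f (a - x)) x = -kdvOp f (a - x) := by
  rw [kdvOp, deriv_deriv_reflect, deriv_reflect, deriv_reflect, kdvOp]
  ring

/-- `y` is a solution, possibly zero, of `y''' + y' + λ y = 0` on `[0, L]`. -/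
structure IsKdVSolution (lam : ℂ) (L : ℝ) (y : ℝ → ℂ) : Prop where
  contDiff : ContDiff ℝ 3 y
  kdvOp_eq : ∀ x ∈ Icc 0 L, kdvOp y x = lam * y x

lemma sub_mem_Icc_zero {L x : ℝ} (hx : x ∈ Icc 0 L) : L - x ∈ Icc 0 L :=
  ⟨sub_nonneg.2 hx.2, sub_le_self L hx.1⟩

namespace IsKdVSolution

variable {lam : ℂ} {L : ℝ} {y z : ℝ → ℂ}

lemma add_const_mul (hy : IsKdVSolution lam L y) (hz : IsKdVSolution lam L z) (c : ℂ) :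
    IsKdVSolution lam L fun x => y x + c * z x where
  contDiff := hy.contDiff.add (contDiff_const.mul hz.contDiff)
  kdvOp_eq x hx := by
    rw [kdvOp_add_const_mul hy.contDiff hz.contDiff, hy.kdvOp_eq x hx, hz.kdvOp_eq x hx]
    ring

lemma reflect (hy : IsKdVSolution lam L y) : IsKdVSolution (-lam) L fun x => y (L - x) where
  contDiff := hy.contDiff.comp (contDiff_const.sub contDiff_id)
  kdvOp_eq x hx := by
    rw [kdvOp_reflect, hy.kdvOp_eq _ (sub_mem_Icc_zero hx), neg_mul]

lemma hasDerivAt (hy : IsKdVSolution lam L y) (x : ℝ) : HasDerivAt y (deriv y x) x :=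
  ((differentiable_iterates_of_contDiff_three hy.contDiff).1 x).hasDerivAt

lemma hasDerivAt_deriv (hy : IsKdVSolution lam L y) (x : ℝ) :
    HasDerivAt (deriv y) (deriv (deriv y) x) x :=
  ((differentiable_iterates_of_contDiff_three hy.contDiff).2.1 x).hasDerivAt

lemma hasDerivAt_deriv_deriv (hy : IsKdVSolution lam L y) {x : ℝ} (hx : x ∈ Icc 0 L) :
    HasDerivAt (deriv (deriv y)) (-deriv y x - lam * y x) x := by
  have heq : -deriv y x - deriv (deriv (deriv y)) x = lam * y x := hy.kdvOp_eq x hx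
  exact ((differentiable_iterates_of_contDiff_three hy.contDiff).2.2 x).hasDerivAt.congr_deriv
    (by linear_combination -heq)

lemma eq_zero (hy : IsKdVSolution lam L y) (h₀ : y 0 = 0) (h₁ : deriv y 0 = 0)
    (h₂ : deriv (deriv y) 0 = 0) : ∀ x ∈ Icc 0 L, y x = 0 := by
  let A : ℂ × ℂ × ℂ →L[ℝ] ℂ × ℂ × ℂ :=
    let p₀ := ContinuousLinearMap.fst ℝ ℂ (ℂ × ℂ)
    let p₁₂ := ContinuousLinearMap.snd ℝ ℂ (ℂ × ℂ)
    let p₁ := (ContinuousLinearMap.fst ℝ ℂ ℂ).comp p₁₂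
    let p₂ := (ContinuousLinearMap.snd ℝ ℂ ℂ).comp p₁₂
    p₁.prod (p₂.prod (-p₁ - lam • p₀))
  have hjet : ∀ x ∈ Icc 0 L, HasDerivAt (fun x => (y x, deriv y x, deriv (deriv y) x))
      (A (y x, deriv y x, deriv (deriv y) x)) x := fun x hx =>
    (hy.hasDerivAt x).prodMk ((hy.hasDerivAt_deriv x).prodMk (hy.hasDerivAt_deriv_deriv hx))
  have hEq : EqOn (fun x => (y x, deriv y x, deriv (deriv y) x)) (fun _ => 0) (Icc 0 L) :=
    ODE_solution_unique (v := fun _ => A) (fun _ => A.lipschitz)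
      (fun x hx => (hjet x hx).continuousAt.continuousWithinAt)
      (fun x hx => (hjet x (Ico_subset_Icc_self hx)).hasDerivWithinAt)
      continuousOn_const (fun x _ => by simpa using hasDerivWithinAt_const x (Ici x) 0)
      (by simp only [h₀, h₁, h₂, Prod.mk_zero_zero])
  exact fun x hx => congrArg Prod.fst (hEq hx)

end IsKdVSolution

section Characteristic

/-- `s` is a root of the characteristic polynomial of `y''' + y' + λ y = 0`. -/
def IsCharRoot (lam s : ℂ) : Prop :=
  s ^ 3 + s + lam = 0

variable {lam a b c : ℂ}

lemma isCharRoot_iff_of_ne (ha : IsCharRoot lam a) (hab : a ≠ b) :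
    IsCharRoot lam b ↔ a ^ 2 + a * b + b ^ 2 + 1 = 0 := by
  have hfactor : b ^ 3 + b + lam = (b - a) * (a ^ 2 + a * b + b ^ 2 + 1) := by
    have hroot : a ^ 3 + a + lam = 0 := ha
    linear_combination hroot
  rw [IsCharRoot, hfactor, mul_eq_zero, or_iff_right (sub_ne_zero.2 hab.symm)]

lemma add_add_eq_zero_of_isCharRoot (ha : IsCharRoot lam a) (hb : IsCharRoot lam b)
    (hc : IsCharRoot lam c) (hab : a ≠ b) (hac : a ≠ c) (hbc : b ≠ c) : a + b + c = 0 := by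
  have hb' := (isCharRoot_iff_of_ne ha hab).1 hb
  have hc' := (isCharRoot_iff_of_ne ha hac).1 hc
  exact mul_left_cancel₀ (sub_ne_zero.2 hbc) (by linear_combination hb' - hc')

lemma IsCharRoot.neg_two_mul (ha : IsCharRoot lam a) (hdouble : 3 * a ^ 2 + 1 = 0) :
    IsCharRoot lam (-2 * a) := by
  unfold IsCharRoot at *
  linear_combination ha - 3 * a * hdouble

lemma ne_neg_two_mul_of_double (hdouble : 3 * a ^ 2 + 1 = 0) : a ≠ -2 * a := by
  intro h
  obtain rfl : a = 0 := by linear_combination h / 3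
  norm_num at hdouble

lemma exists_isCharRoot (lam : ℂ) : ∃ a, IsCharRoot lam a := by
  let p : Polynomial ℂ := Polynomial.X ^ 3 + Polynomial.X + Polynomial.C lam
  have hdegree : p.degree = 3 := by
    unfold p
    compute_degree!
  obtain ⟨a, ha⟩ := IsAlgClosed.exists_root p (by simp [hdegree])
  exact ⟨a, by simpa [p, Polynomial.IsRoot, IsCharRoot] using ha⟩

lemma exists_three_isCharRoot_of_simple
    (hsimple : ∀ s, IsCharRoot lam s → 3 * s ^ 2 + 1 ≠ 0) :
    ∃ a b c, IsCharRoot lam a ∧ IsCharRoot lam b ∧ IsCharRoot lam c ∧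
      a ≠ b ∧ a ≠ c ∧ b ≠ c := by
  obtain ⟨a, ha⟩ := exists_isCharRoot lam
  -- The other two roots solve `X² + aX + a² + 1 = 0`, whose discriminant is `-3a² - 4`.
  obtain ⟨d, hd⟩ := IsAlgClosed.exists_pow_nat_eq (-3 * a ^ 2 - 4) two_pos
  have hfactor (s : ℂ) (hs : a ^ 2 + a * s + s ^ 2 + 1 = 0) : IsCharRoot lam s ∧ a ≠ s := by
    have hroot : IsCharRoot lam s := by
      unfold IsCharRoot at *
      linear_combination ha + (s - a) * hs
    refine ⟨hroot, ?_⟩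
    rintro rfl
    exact hsimple a ha (by linear_combination hs)
  obtain ⟨hb, hab⟩ := hfactor ((-a + d) / 2) (by linear_combination hd / 4)
  obtain ⟨hc, hac⟩ := hfactor ((-a - d) / 2) (by linear_combination hd / 4)
  refine ⟨a, _, _, ha, hb, hc, hab, hac, fun hbc => hsimple _ hb ?_⟩
  obtain rfl : d = 0 := by linear_combination hbc
  linear_combination hd / 4

/-- The characteristic roots `s` whose exponential solution `x ↦ exp (s x)` is multiplied by `μ`
when `x` moves from `0` to `L`. -/
def resonantRoots (lam μ : ℂ) (L : ℝ) : Set ℂ :=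
  {s | IsCharRoot lam s ∧ exp (s * L) = μ}

end Characteristic

namespace IsKdVSolution

variable {lam s : ℂ} {L : ℝ} {y z : ℝ → ℂ}

-- `y'' + s y' + (s² + 1) y` is the quotient of the equation by its factor `∂ - s`.
lemma charRoot_integral (hy : IsKdVSolution lam L y) (hL : 0 ≤ L) (hs : IsCharRoot lam s) :
    deriv (deriv y) L + s * deriv y L + (s ^ 2 + 1) * y L =
      exp (s * L) * (deriv (deriv y) 0 + s * deriv y 0 + (s ^ 2 + 1) * y 0) := by
  have hroot : s ^ 3 + s + lam = 0 := hs
  have hderiv : ∀ x ∈ Icc 0 L, HasDerivAt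
      (fun x => deriv (deriv y) x + s * deriv y x + (s ^ 2 + 1) * y x)
      (s * (deriv (deriv y) x + s * deriv y x + (s ^ 2 + 1) * y x)) x := fun x hx =>
    (((hy.hasDerivAt_deriv_deriv hx).add ((hy.hasDerivAt_deriv x).const_mul s)).add
      ((hy.hasDerivAt x).const_mul (s ^ 2 + 1))).congr_deriv (by
        linear_combination -y x * hroot)
  simpa using eq_exp_mul_of_hasDerivAt_mul hL hderiv

lemma double_charRoot_integral (hy : IsKdVSolution lam L y) (hL : 0 ≤ L) (hs : IsCharRoot lam s)
    (hdouble : 3 * s ^ 2 + 1 = 0) :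
    deriv y L + 2 * s * y L - L * (deriv (deriv y) L + s * deriv y L + (s ^ 2 + 1) * y L) =
      exp (s * L) * (deriv y 0 + 2 * s * y 0) := by
  have hroot : s ^ 3 + s + lam = 0 := hs
  have hderiv : ∀ x ∈ Icc 0 L, HasDerivAt
      (fun x : ℝ => deriv y x + 2 * s * y x -
        x * (deriv (deriv y) x + s * deriv y x + (s ^ 2 + 1) * y x))
      (s * (deriv y x + 2 * s * y x -
        x * (deriv (deriv y) x + s * deriv y x + (s ^ 2 + 1) * y x))) x := fun x hx =>
    (((hy.hasDerivAt_deriv x).add ((hy.hasDerivAt x).const_mul (2 * s))).sub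
      ((Complex.ofRealCLM.hasDerivAt (x := x)).mul
        (((hy.hasDerivAt_deriv_deriv hx).add ((hy.hasDerivAt_deriv x).const_mul s)).add
          ((hy.hasDerivAt x).const_mul (s ^ 2 + 1))))).congr_deriv (by
        simp only [Pi.add_apply, Complex.ofRealCLM_apply, Complex.ofReal_one]
        linear_combination x * y x * hroot - y x * hdouble)
  simpa using eq_exp_mul_of_hasDerivAt_mul hL hderiv

-- Reflection turns the equation into its adjoint; the conserved quantity is the bilinear
-- concomitant of `y` and `z (L - ·)`.
lemma deriv_mul_deriv_eq (hy : IsKdVSolution lam L y) (hz : IsKdVSolution lam L z) (hL : 0 ≤ L)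
    (hy₀ : y 0 = 0) (hyL : y L = 0) (hz₀ : z 0 = 0) (hzL : z L = 0) :
    deriv z 0 * deriv y L = deriv z L * deriv y 0 := by
  have hderiv : ∀ x ∈ Icc 0 L, HasDerivAt
      (fun x => z (L - x) * deriv (deriv y) x + deriv z (L - x) * deriv y x +
        deriv (deriv z) (L - x) * y x + z (L - x) * y x)
      (0 * (z (L - x) * deriv (deriv y) x + deriv z (L - x) * deriv y x +
        deriv (deriv z) (L - x) * y x + z (L - x) * y x)) x := by
    intro x hx
    have hz₁ := (hz.hasDerivAt (L - x)).comp_const_sub L x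
    have hz₂ := (hz.hasDerivAt_deriv (L - x)).comp_const_sub L x
    have hz₃ := (hz.hasDerivAt_deriv_deriv (sub_mem_Icc_zero hx)).comp_const_sub L x
    exact ((((hz₁.mul (hy.hasDerivAt_deriv_deriv hx)).add (hz₂.mul (hy.hasDerivAt_deriv x))).add
      (hz₃.mul (hy.hasDerivAt x))).add (hz₁.mul (hy.hasDerivAt x))).congr_deriv (by ring)
  simpa [hy₀, hyL, hz₀, hzL] using eq_exp_mul_of_hasDerivAt_mul hL hderiv

lemma exists_deriv_eq_mul_deriv (hy : IsKdVSolution lam L y) (hz : IsKdVSolution lam L z)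
    (hL : 0 ≤ L) (hy₀ : y 0 = 0) (hyL : y L = 0) (hz₀ : z 0 = 0) (hzL : z L = 0)
    (h₁ : deriv y L = -deriv z 0) (h₁' : deriv y 0 = deriv z L) :
    ∃ ε : ℂ, ε ^ 2 = -1 ∧ deriv y 0 = ε * deriv z 0 := by
  have hsq : (deriv y 0) ^ 2 = (I * deriv z 0) ^ 2 := by
    have hconc := hy.deriv_mul_deriv_eq hz hL hy₀ hyL hz₀ hzL
    rw [h₁, ← h₁'] at hconc
    linear_combination -hconc - (deriv z 0) ^ 2 * Complex.I_sq
  rcases sq_eq_sq_iff_eq_or_eq_neg.1 hsq with h | h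
  · exact ⟨I, Complex.I_sq, h⟩
  · exact ⟨-I, by rw [neg_sq, Complex.I_sq], by rw [h, neg_mul]⟩

end IsKdVSolution

/-- A solution of `y''' + y' + λ y = 0` on `[0, L]` which vanishes at both ends and whose
nonzero `2`-jet at `0` is multiplied by `μ` on reaching `L`, i.e. an eigenvector of the monodromy
from `0` to `L`, with Floquet multiplier `μ`, among the solutions with `y 0 = 0`. -/
structure IsFloquetMode (lam μ : ℂ) (L : ℝ) (y : ℝ → ℂ) : Prop extends
    IsKdVSolution lam L y where
  left : y 0 = 0
  right : y L = 0
  deriv_right : deriv y L = μ * deriv y 0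
  deriv_deriv_right : deriv (deriv y) L = μ * deriv (deriv y) 0
  jet_ne_zero : ¬(deriv y 0 = 0 ∧ deriv (deriv y) 0 = 0)

namespace IsFloquetMode

variable {lam μ s t : ℂ} {L : ℝ} {y : ℝ → ℂ}

lemma mem_resonantRoots (h : IsFloquetMode lam μ L y) (hL : 0 ≤ L) (hs : IsCharRoot lam s)
    (hne : deriv (deriv y) 0 + s * deriv y 0 ≠ 0) : s ∈ resonantRoots lam μ L := by
  have hint := h.charRoot_integral hL hs
  rw [h.left, h.right, h.deriv_right, h.deriv_deriv_right] at hint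
  exact ⟨hs, mul_right_cancel₀ hne (by linear_combination -hint)⟩

lemma mem_resonantRoots_of_double (h : IsFloquetMode lam μ L y) (hL : 0 < L)
    (hs : IsCharRoot lam s) (hdouble : 3 * s ^ 2 + 1 = 0) :
    s ∈ resonantRoots lam μ L ∧ deriv y 0 ≠ 0 ∧ deriv (deriv y) 0 + s * deriv y 0 = 0 := by
  have hint := h.double_charRoot_integral hL.le hs hdouble
  rw [h.left, h.right, h.deriv_right, h.deriv_deriv_right] at hint
  have hzero : deriv (deriv y) 0 + s * deriv y 0 = 0 := by
    by_contra hne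
    have hexp := (h.mem_resonantRoots hL.le hs hne).2
    rw [hexp] at hint
    have hμ : μ ≠ 0 := hexp ▸ Complex.exp_ne_zero _
    have hprod : L * μ * (deriv (deriv y) 0 + s * deriv y 0) = 0 := by linear_combination -hint
    exact mul_ne_zero (mul_ne_zero (Complex.ofReal_ne_zero.2 hL.ne') hμ) hne hprod
  have hy₁ : deriv y 0 ≠ 0 := fun hy₁ => h.jet_ne_zero ⟨hy₁, by simpa [hy₁] using hzero⟩
  exact ⟨⟨hs, mul_right_cancel₀ hy₁ (by linear_combination -hint - L * μ * hzero)⟩, hy₁, hzero⟩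

lemma mem_resonantRoots_or (h : IsFloquetMode lam μ L y) (hL : 0 ≤ L) (hs : IsCharRoot lam s)
    (ht : IsCharRoot lam t) (hst : s ≠ t) :
    s ∈ resonantRoots lam μ L ∨ t ∈ resonantRoots lam μ L := by
  by_contra! hnot
  have hs₀ := not_imp_comm.1 (h.mem_resonantRoots hL hs) hnot.1
  have ht₀ := not_imp_comm.1 (h.mem_resonantRoots hL ht) hnot.2
  have hy₁ : deriv y 0 = 0 :=
    (mul_eq_zero.1 (by linear_combination hs₀ - ht₀ : (s - t) * deriv y 0 = 0)).resolve_left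
      (sub_ne_zero.2 hst)
  exact h.jet_ne_zero ⟨hy₁, by simpa [hy₁] using hs₀⟩

lemma nontrivial_resonantRoots (h : IsFloquetMode lam μ L y) (hL : 0 < L) :
    (resonantRoots lam μ L).Nontrivial := by
  by_cases hsimple : ∀ s, IsCharRoot lam s → 3 * s ^ 2 + 1 ≠ 0
  · obtain ⟨a, b, c, ha, hb, hc, hab, hac, hbc⟩ := exists_three_isCharRoot_of_simple hsimple
    rcases h.mem_resonantRoots_or hL.le ha hb hab with ha' | hb'
    · rcases h.mem_resonantRoots_or hL.le hb hc hbc with hb' | hc'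
      exacts [⟨a, ha', b, hb', hab⟩, ⟨a, ha', c, hc', hac⟩]
    · rcases h.mem_resonantRoots_or hL.le ha hc hac with ha' | hc'
      exacts [⟨a, ha', b, hb', hab⟩, ⟨b, hb', c, hc', hbc⟩]
  · push Not at hsimple
    obtain ⟨s, hs, hdouble⟩ := hsimple
    obtain ⟨hs', hy₁, hzero⟩ := h.mem_resonantRoots_of_double hL hs hdouble
    have hne := ne_neg_two_mul_of_double hdouble
    refine ⟨s, hs', -2 * s, h.mem_resonantRoots hL.le (hs.neg_two_mul hdouble) ?_, hne⟩
    intro hzero'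
    exact hne (mul_right_cancel₀ hy₁ (by linear_combination hzero - hzero'))

lemma exists_three_resonantRoots (h : IsFloquetMode lam μ L y) (hL : 0 < L)
    (hy₁ : deriv y 0 = 0) :
    ∃ a ∈ resonantRoots lam μ L, ∃ b ∈ resonantRoots lam μ L, ∃ c ∈ resonantRoots lam μ L,
      a ≠ b ∧ a ≠ c ∧ b ≠ c := by
  have hy₂ : deriv (deriv y) 0 ≠ 0 := fun hy₂ => h.jet_ne_zero ⟨hy₁, hy₂⟩
  have hmem (s : ℂ) (hs : IsCharRoot lam s) : s ∈ resonantRoots lam μ L :=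
    h.mem_resonantRoots hL.le hs (by simpa [hy₁] using hy₂)
  obtain ⟨a, b, c, ha, hb, hc, hne⟩ := exists_three_isCharRoot_of_simple fun s hs hdouble =>
    (h.mem_resonantRoots_of_double hL hs hdouble).2.1 hy₁
  exact ⟨a, hmem a ha, b, hmem b hb, c, hmem c hc, hne⟩

end IsFloquetMode

section ExponentialSum

variable {ι : Type*} [Fintype ι]

/-- The exponential sum `x ↦ ∑ j, c j * exp (s j * x)`. -/
noncomputable def expSum (c s : ι → ℂ) (x : ℝ) : ℂ :=
  ∑ j, c j * exp (s j * x)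

lemma contDiff_expSum (c s : ι → ℂ) {n : WithTop ℕ∞} : ContDiff ℝ n (expSum c s) := by
  have hcast : ContDiff ℝ n fun x : ℝ => (x : ℂ) := Complex.ofRealCLM.contDiff
  unfold expSum
  fun_prop

lemma deriv_expSum (c s : ι → ℂ) : deriv (expSum c s) = expSum (c * s) s := by
  funext x
  refine (HasDerivAt.fun_sum fun j _ =>
    (hasDerivAt_exp_const_mul (s j) x).const_mul (c j)).deriv.trans ?_
  exact Finset.sum_congr rfl fun j _ => by rw [Pi.mul_apply]; ring

lemma expSum_zero (c s : ι → ℂ) : expSum c s 0 = ∑ j, c j := by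
  simp [expSum]

lemma expSum_eq_mul {s : ι → ℂ} {μ : ℂ} {L : ℝ} (hs : ∀ j, exp (s j * L) = μ) (c : ι → ℂ) :
    expSum c s L = μ * expSum c s 0 := by
  rw [expSum_zero, expSum, Finset.mul_sum]
  exact Finset.sum_congr rfl fun j _ => by rw [hs, mul_comm]

lemma isFloquetMode_expSum {c s : ι → ℂ} {lam μ : ℂ} {L : ℝ}
    (hs : ∀ j, s j ∈ resonantRoots lam μ L) (hc : ∑ j, c j = 0)
    (hne : ¬(∑ j, c j * s j = 0 ∧ ∑ j, c j * s j * s j = 0)) :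
    IsFloquetMode lam μ L (expSum c s) where
  contDiff := contDiff_expSum c s
  kdvOp_eq x _ := by
    simp only [kdvOp, deriv_expSum, expSum, Pi.mul_apply, Finset.mul_sum,
      ← Finset.sum_neg_distrib, ← Finset.sum_sub_distrib]
    refine Finset.sum_congr rfl fun j _ => ?_
    have hroot : s j ^ 3 + s j + lam = 0 := (hs j).1
    linear_combination -c j * exp (s j * x) * hroot
  left := by rw [expSum_zero, hc]
  right := by rw [expSum_eq_mul fun j => (hs j).2, expSum_zero, hc, mul_zero]
  deriv_right := by rw [deriv_expSum, expSum_eq_mul fun j => (hs j).2]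
  deriv_deriv_right := by rw [deriv_expSum, deriv_expSum, expSum_eq_mul fun j => (hs j).2]
  jet_ne_zero := by simpa only [deriv_expSum, expSum_zero, Pi.mul_apply] using hne

end ExponentialSum

theorem exists_isFloquetMode_iff {lam μ : ℂ} {L : ℝ} (hL : 0 < L) :
    (∃ y, IsFloquetMode lam μ L y) ↔ (resonantRoots lam μ L).Nontrivial := by
  refine ⟨fun ⟨y, hy⟩ => hy.nontrivial_resonantRoots hL, ?_⟩
  rintro ⟨a, ha, b, hb, hab⟩
  refine ⟨expSum ![1, -1] ![a, b], isFloquetMode_expSum (Fin.forall_fin_two.2 ⟨ha, hb⟩) ?_ ?_⟩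
  · simp
  · rintro ⟨h, -⟩
    exact hab (sub_eq_zero.1 (by simpa [sub_eq_add_neg] using h))

theorem exists_isFloquetMode_deriv_eq_zero_iff {lam μ : ℂ} {L : ℝ} (hL : 0 < L) :
    (∃ y, IsFloquetMode lam μ L y ∧ deriv y 0 = 0) ↔
      ∃ a ∈ resonantRoots lam μ L, ∃ b ∈ resonantRoots lam μ L, ∃ c ∈ resonantRoots lam μ L,
        a ≠ b ∧ a ≠ c ∧ b ≠ c := by
  refine ⟨fun ⟨y, hy, hy₁⟩ => hy.exists_three_resonantRoots hL hy₁, ?_⟩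
  rintro ⟨a, ha, b, hb, c, hc, hab, hac, hbc⟩
  -- These weights annihilate `1` and `s`; on `s²` they give the Vandermonde determinant.
  refine ⟨expSum ![b - c, c - a, a - b] ![a, b, c], isFloquetMode_expSum ?_ ?_ ?_, ?_⟩
  · exact Fin.forall_fin_succ.2 ⟨ha, Fin.forall_fin_two.2 ⟨hb, hc⟩⟩
  · simp [Fin.sum_univ_three]
  · rintro ⟨-, h⟩
    have hdet : (a - b) * (a - c) * (b - c) = 0 := by
      simp only [Fin.sum_univ_three, Matrix.cons_val] at h
      linear_combination h
    simp [sub_eq_zero, hab, hac, hbc] at hdet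
  · simp only [deriv_expSum, expSum_zero, Pi.mul_apply, Fin.sum_univ_three, Matrix.cons_val]
    ring

/-- `(θ, u)` is a nonzero mode, with eigenvalue `λ`, of the linearized Boussinesq system on `[0, L]`
with the seven boundary conditions of the eigenvalue problem. -/
structure IsBoussinesqMode (lam : ℂ) (L : ℝ) (θ u : ℝ → ℂ) : Prop where
  contDiff_theta : ContDiff ℝ 3 θ
  contDiff_u : ContDiff ℝ 3 u
  ne_zero : ¬∀ x ∈ Icc 0 L, θ x = 0 ∧ u x = 0
  kdvOp_u : ∀ x ∈ Icc 0 L, kdvOp u x = lam * θ x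
  kdvOp_theta : ∀ x ∈ Icc 0 L, kdvOp θ x = lam * u x
  theta_zero : θ 0 = 0
  theta_end : θ L = 0
  deriv_theta_zero : deriv θ 0 = 0
  deriv_deriv_theta_end : deriv (deriv θ) L = 0
  u_zero : u 0 = 0
  u_end : u L = 0
  deriv_u_end : deriv u L = 0

lemma exists_isFloquetMode_of_twisted {lam : ℂ} {L : ℝ} {v z : ℝ → ℂ} (hL : 0 ≤ L)
    (hv : IsKdVSolution lam L v) (hz : IsKdVSolution lam L z)
    (hne : ¬∀ x ∈ Icc 0 L, v x = 0 ∧ z x = 0)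
    (hv₀ : v 0 = 0) (hvL : v L = 0) (hz₀ : z 0 = 0) (hzL : z L = 0)
    (h₁ : deriv v L = -deriv z 0) (h₁' : deriv v 0 = deriv z L)
    (h₂ : deriv (deriv v) L = -deriv (deriv z) 0) :
    (∃ μ y, IsFloquetMode lam μ L y ∧ deriv y 0 = 0) ∨
      ∃ μ, μ ^ 2 = -1 ∧ ∃ y, IsFloquetMode lam μ L y := by
  obtain ⟨ε, hε, hvz⟩ := hv.exists_deriv_eq_mul_deriv hz hL hv₀ hvL hz₀ hzL h₁ h₁'
  have hderiv := deriv_add_const_mul (differentiable_iterates_of_contDiff_three hv.contDiff).1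
    (differentiable_iterates_of_contDiff_three hz.contDiff).1 (-ε)
  have hderiv₂ := deriv_deriv_add_const_mul hv.contDiff hz.contDiff (-ε)
  have hp₁ : deriv (fun x => v x + -ε * z x) 0 = 0 := by
    rw [hderiv]
    linear_combination hvz
  by_cases hp₂ : deriv (deriv fun x => v x + -ε * z x) 0 = 0
  · rw [hderiv₂] at hp₂
    refine .inr ⟨ε, hε, v, hv, hv₀, hvL, ?_, ?_, ?_⟩
    · linear_combination h₁ - ε * hvz - deriv z 0 * hε
    · linear_combination h₂ - ε * hp₂ - deriv (deriv z) 0 * hε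
    · rintro ⟨hv₁, hv₂⟩
      have hz₁ : deriv z 0 = 0 := by linear_combination -ε * (hv₁ - hvz) + deriv z 0 * hε
      have hz₂ : deriv (deriv z) 0 = 0 := by
        linear_combination -ε * (hv₂ - hp₂) + deriv (deriv z) 0 * hε
      exact hne fun x hx => ⟨hv.eq_zero hv₀ hv₁ hv₂ x hx, hz.eq_zero hz₀ hz₁ hz₂ x hx⟩
  · refine .inl ⟨deriv (deriv fun x => v x + -ε * z x) L / deriv (deriv fun x => v x + -ε * z x) 0,
      _, ⟨hv.add_const_mul hz (-ε), ?_, ?_, ?_, ?_, fun h => hp₂ h.2⟩, hp₁⟩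
    · rw [hv₀, hz₀, mul_zero, add_zero]
    · rw [hvL, hzL, mul_zero, add_zero]
    · rw [hp₁, mul_zero, hderiv]
      linear_combination h₁ + ε * h₁' - ε * hvz - deriv z 0 * hε
    · exact (div_mul_cancel₀ _ hp₂).symm

namespace IsBoussinesqMode

variable {lam c : ℂ} {L : ℝ} {θ u : ℝ → ℂ}

lemma isKdVSolution (h : IsBoussinesqMode lam L θ u) (hc : c ^ 2 = 1) :
    IsKdVSolution (c * lam) L fun x => θ x + c * u x where
  contDiff := h.contDiff_theta.add (contDiff_const.mul h.contDiff_u)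
  kdvOp_eq x hx := by
    rw [kdvOp_add_const_mul h.contDiff_theta h.contDiff_u, h.kdvOp_theta x hx,
      h.kdvOp_u x hx]
    linear_combination -lam * u x * hc

lemma exists_isFloquetMode (h : IsBoussinesqMode lam L θ u) (hL : 0 ≤ L) :
    (∃ μ y, IsFloquetMode lam μ L y ∧ deriv y 0 = 0) ∨
      ∃ μ, μ ^ 2 = -1 ∧ ∃ y, IsFloquetMode lam μ L y := by
  have hv : IsKdVSolution lam L fun x => θ x + 1 * u x := by
    simpa only [one_mul] using h.isKdVSolution (one_pow 2)
  have hz : IsKdVSolution lam L fun x => θ (L - x) + -1 * u (L - x) := by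
    simpa only [neg_mul, neg_neg, one_mul] using (h.isKdVSolution (c := -1) neg_one_sq).reflect
  have hθ₁ := (differentiable_iterates_of_contDiff_three h.contDiff_theta).1
  have hu₁ := (differentiable_iterates_of_contDiff_three h.contDiff_u).1
  have hderiv (c : ℂ) := deriv_add_const_mul hθ₁ hu₁ c
  have hderiv₂ (c : ℂ) := deriv_deriv_add_const_mul h.contDiff_theta h.contDiff_u c
  have hrefl := deriv_reflect (fun x => θ x + -1 * u x) L
  have hrefl₂ := deriv_deriv_reflect (fun x => θ x + -1 * u x) L
  refine exists_isFloquetMode_of_twisted hL hv hz ?_ ?_ ?_ ?_ ?_ ?_ ?_ ?_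
  · refine fun hzero => h.ne_zero fun x hx => ?_
    have hsum := (hzero x hx).1
    have hdiff := (hzero (L - x) (sub_mem_Icc_zero hx)).2
    rw [sub_sub_cancel] at hdiff
    exact ⟨by linear_combination (hsum + hdiff) / 2, by linear_combination (hsum - hdiff) / 2⟩
  · simp [h.theta_zero, h.u_zero]
  · simp [h.theta_end, h.u_end]
  · simp [h.theta_end, h.u_end]
  · simp [h.theta_zero, h.u_zero]
  · simp only [hrefl, hderiv, h.deriv_u_end, sub_zero, mul_zero, add_zero, neg_neg]
  · simp only [hrefl, hderiv, h.deriv_theta_zero, sub_self]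
    ring
  · simp only [hrefl₂, hderiv₂, h.deriv_deriv_theta_end, sub_zero]
    ring

end IsBoussinesqMode

-- `θ + u = 2 y`, and `θ - u` is a multiple of the reflection of `y`.
lemma IsFloquetMode.isBoussinesqMode {lam μ : ℂ} {L : ℝ} {y : ℝ → ℂ}
    (h : IsFloquetMode lam μ L y) (hL : 0 < L) (hμ : deriv y 0 = 0 ∨ μ ^ 2 = -1) :
    IsBoussinesqMode lam L (fun x => y x + -μ * y (L - x)) (fun x => y x + μ * y (L - x)) := by
  have hrefl := h.reflect
  have hy₁ := (differentiable_iterates_of_contDiff_three h.contDiff).1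
  have hderiv (c : ℂ) := deriv_add_const_mul hy₁
    (differentiable_iterates_of_contDiff_three hrefl.contDiff).1 c
  have hderiv₂ (c : ℂ) := deriv_deriv_add_const_mul h.contDiff hrefl.contDiff c
  have hkdv (c : ℂ) : ∀ x ∈ Icc 0 L,
      kdvOp (fun x => y x + c * y (L - x)) x = lam * (y x + -c * y (L - x)) := fun x hx => by
    rw [kdvOp_add_const_mul h.contDiff hrefl.contDiff, h.kdvOp_eq x hx, hrefl.kdvOp_eq x hx]
    ring
  refine ⟨h.contDiff.add (contDiff_const.mul hrefl.contDiff),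
    h.contDiff.add (contDiff_const.mul hrefl.contDiff), fun hzero => ?_, hkdv μ, ?_,
    ?_, ?_, ?_, ?_, ?_, ?_, ?_⟩
  · have hy (x) (hx : x ∈ Icc 0 L) : y x = 0 := by
      obtain ⟨hθ, hu⟩ := hzero x hx
      linear_combination (hθ + hu) / 2
    have hy' := eqOn_deriv_zero_of_eqOn_zero hL hy₁ hy
    have hy'' := eqOn_deriv_zero_of_eqOn_zero hL
      (differentiable_iterates_of_contDiff_three h.contDiff).2.1 hy'
    exact h.jet_ne_zero ⟨hy' 0 (left_mem_Icc.2 hL.le), hy'' 0 (left_mem_Icc.2 hL.le)⟩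
  · simpa only [neg_neg] using hkdv (-μ)
  · simp [h.left, h.right]
  · simp [h.left, h.right]
  · have hμ' : (1 + μ ^ 2) * deriv y 0 = 0 := by
      rcases hμ with hμ | hμ
      · rw [hμ, mul_zero]
      · rw [hμ, add_neg_cancel, zero_mul]
    simp only [hderiv, deriv_reflect, sub_zero, h.deriv_right]
    linear_combination hμ'
  · simp only [hderiv₂, deriv_deriv_reflect, sub_self, h.deriv_deriv_right]
    ring
  · simp [h.left, h.right]
  · simp [h.left, h.right]
  · simp [hderiv, deriv_reflect, h.deriv_right]

theorem exists_isBoussinesqMode_iff {L : ℝ} (hL : 0 < L) :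
    (∃ lam θ u, IsBoussinesqMode lam L θ u) ↔
      (∃ lam μ y, IsFloquetMode lam μ L y ∧ deriv y 0 = 0) ∨
        ∃ lam μ, μ ^ 2 = -1 ∧ ∃ y, IsFloquetMode lam μ L y := by
  constructor
  · rintro ⟨lam, θ, u, h⟩
    exact (h.exists_isFloquetMode hL.le).imp (fun h' => ⟨lam, h'⟩) fun h' => ⟨lam, h'⟩
  · rintro (⟨lam, μ, y, h, hy₁⟩ | ⟨lam, μ, hμ, y, h⟩)
    · exact ⟨lam, _, _, h.isBoussinesqMode hL (.inl hy₁)⟩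
    · exact ⟨lam, _, _, h.isBoussinesqMode hL (.inr hμ)⟩

section CriticalLengths

variable {a b c : ℂ} {L : ℝ}

lemma eq_mul_sqrt_iff {x k q : ℝ} (hx : 0 ≤ x) (hk : 0 ≤ k) (hq : 0 ≤ q) :
    x = k * √q ↔ x ^ 2 = k ^ 2 * q := by
  rw [← sq_eq_sq₀ hx (by positivity), mul_pow, Real.sq_sqrt hq]

lemma sq_add_mul_add_sq_nonneg (x y : ℝ) : 0 ≤ x ^ 2 + x * y + y ^ 2 := by
  nlinarith [sq_nonneg (x + y), sq_nonneg x, sq_nonneg y]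

lemma exists_pos_sq_add_mul_add_sq_eq {m n : ℤ} (hm : m ≠ 0) (hn : n ≠ 0) (hmn : m + n ≠ 0) :
    ∃ k l : ℕ, 0 < k ∧ 0 < l ∧ (k : ℤ) ^ 2 + k * l + (l : ℤ) ^ 2 = m ^ 2 + m * n + n ^ 2 := by
  suffices h : ∃ k l : ℤ, 0 < k ∧ 0 < l ∧ k ^ 2 + k * l + l ^ 2 = m ^ 2 + m * n + n ^ 2 by
    obtain ⟨k, l, hk, hl, hkl⟩ := h
    lift k to ℕ using hk.le
    lift l to ℕ using hl.le
    exact ⟨k, l, by exact_mod_cast hk, by exact_mod_cast hl, hkl⟩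
  -- Up to sign, two of the numbers `m`, `n`, `-(m + n)` are positive.
  rcases lt_or_gt_of_ne hm with hm | hm <;> rcases lt_or_gt_of_ne hn with hn | hn
  · exact ⟨-m, -n, by omega, by omega, by ring⟩
  · rcases lt_or_gt_of_ne hmn with hmn | hmn
    · exact ⟨-(m + n), n, by omega, by omega, by ring⟩
    · exact ⟨m + n, -m, by omega, by omega, by ring⟩
  · rcases lt_or_gt_of_ne hmn with hmn | hmn
    · exact ⟨-(m + n), m, by omega, by omega, by ring⟩
    · exact ⟨m + n, -n, by omega, by omega, by ring⟩
  · exact ⟨m, n, hm, hn, rfl⟩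

lemma mem_criticalN_iff (hL : 0 ≤ L) :
    L ∈ criticalN ↔ ∃ m n : ℤ, m ≠ 0 ∧ n ≠ 0 ∧ m + n ≠ 0 ∧
      L ^ 2 = 4 * π ^ 2 / 3 * ((m : ℝ) ^ 2 + m * n + (n : ℝ) ^ 2) := by
  have hsq (k l : ℕ) : L = 2 * π / √3 * √((k : ℝ) ^ 2 + k * l + (l : ℝ) ^ 2) ↔
      L ^ 2 = 4 * π ^ 2 / 3 * ((k : ℝ) ^ 2 + k * l + (l : ℝ) ^ 2) := by
    rw [eq_mul_sqrt_iff hL (by positivity) (by positivity), div_pow, mul_pow,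
      Real.sq_sqrt zero_le_three]
    norm_num
  constructor
  · rintro ⟨k, l, hk, hl, hLkl⟩
    exact ⟨k, l, by omega, by omega, by omega, by exact_mod_cast (hsq k l).1 hLkl⟩
  · rintro ⟨m, n, hm, hn, hmn, hLmn⟩
    obtain ⟨k, l, hk, hl, hkl⟩ := exists_pos_sq_add_mul_add_sq_eq hm hn hmn
    refine ⟨k, l, hk, hl, (hsq k l).2 ?_⟩
    rw [hLmn]
    congr 1
    exact_mod_cast hkl.symm

lemma mem_criticalR_iff (hL : 0 ≤ L) :
    L ∈ criticalR ↔ ∃ k l : ℤ, k ≠ l ∧ L ^ 2 = π ^ 2 *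
      ((1 / 2 + 2 * (k : ℝ)) ^ 2 + (1 / 2 + 2 * k) * (1 / 2 + 2 * l) + (1 / 2 + 2 * l) ^ 2) := by
  refine exists₂_congr fun k l => and_congr_right fun _ => ?_
  rw [← eq_mul_sqrt_iff hL Real.pi_nonneg (sq_add_mul_add_sq_nonneg _ _), add_right_comm]

lemma sq_add_mul_add_sq_add_one_eq_zero_iff {r : ℝ} (hL : L ≠ 0)
    (h : (a ^ 2 + a * b + b ^ 2) * L ^ 2 = -r) :
    a ^ 2 + a * b + b ^ 2 + 1 = 0 ↔ L ^ 2 = r := by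
  have hL' : (L : ℂ) ^ 2 ≠ 0 := pow_ne_zero 2 (Complex.ofReal_ne_zero.2 hL)
  rw [← mul_left_inj' hL', zero_mul, add_mul, one_mul, h, neg_add_eq_zero, eq_comm]
  norm_cast

lemma exp_mul_eq_exp_mul_iff :
    exp (a * L) = exp (b * L) ↔ ∃ n : ℤ, (a - b) * L = n * (2 * π * I) := by
  simp only [Complex.exp_eq_exp_iff_exists_int, sub_mul, sub_eq_iff_eq_add']

lemma ne_iff_of_sub_mul_eq (hL : L ≠ 0) {n : ℤ} (h : (a - b) * L = n * (2 * π * I)) :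
    a ≠ b ↔ n ≠ 0 := by
  have hL' : (L : ℂ) ≠ 0 := Complex.ofReal_ne_zero.2 hL
  rw [← sub_ne_zero, ← mul_ne_zero_iff_right hL', h, mul_ne_zero_iff_right Complex.two_pi_I_ne_zero,
    Int.cast_ne_zero]

lemma sq_add_mul_add_sq_mul_eq {m n : ℤ} (hsum : a + b + c = 0)
    (hab : (a - b) * L = m * (2 * π * I)) (hbc : (b - c) * L = n * (2 * π * I)) :
    (a ^ 2 + a * b + b ^ 2) * L ^ 2 =
      -(4 * π ^ 2 / 3 * ((m : ℝ) ^ 2 + m * n + (n : ℝ) ^ 2) : ℝ) := by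
  obtain rfl : c = -a - b := by linear_combination hsum
  have hform : 3 * ((a ^ 2 + a * b + b ^ 2) * L ^ 2) = ((a - b) * L) ^ 2 +
      (a - b) * L * ((b - (-a - b)) * L) + ((b - (-a - b)) * L) ^ 2 := by ring
  rw [hab, hbc] at hform
  push_cast
  linear_combination hform / 3 + 4 / 3 * π ^ 2 * (m ^ 2 + m * n + n ^ 2) * Complex.I_sq

lemma exists_three_resonantRoots_of_sq_eq (hL : L ≠ 0) {m n : ℤ} (hm : m ≠ 0) (hn : n ≠ 0)
    (hmn : m + n ≠ 0) (hLmn : L ^ 2 = 4 * π ^ 2 / 3 * ((m : ℝ) ^ 2 + m * n + (n : ℝ) ^ 2)) :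
    ∃ lam μ, ∃ a ∈ resonantRoots lam μ L, ∃ b ∈ resonantRoots lam μ L,
      ∃ c ∈ resonantRoots lam μ L, a ≠ b ∧ a ≠ c ∧ b ≠ c := by
  let r : ℂ := 2 * π * I / (3 * L)
  let a := r * (2 * m + n)
  let b := r * (n - m)
  let c := -r * (m + 2 * n)
  have hr : 3 * r * L = 2 * π * I := by
    have hL' : (L : ℂ) ≠ 0 := Complex.ofReal_ne_zero.2 hL
    unfold r
    field_simp
  have hab : (a - b) * L = m * (2 * π * I) := by linear_combination m * hr
  have hbc : (b - c) * L = n * (2 * π * I) := by linear_combination n * hr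
  have hac : (a - c) * L = (m + n : ℤ) * (2 * π * I) := by
    push_cast
    linear_combination hab + hbc
  have hab' := (ne_iff_of_sub_mul_eq hL hab).2 hm
  have hac' := (ne_iff_of_sub_mul_eq hL hac).2 hmn
  have hsum : a + b + c = 0 := by ring
  have hquad : a ^ 2 + a * b + b ^ 2 + 1 = 0 :=
    (sq_add_mul_add_sq_add_one_eq_zero_iff hL (sq_add_mul_add_sq_mul_eq hsum hab hbc)).2 hLmn
  have ha : IsCharRoot (-(a ^ 3 + a)) a := add_neg_cancel _
  have hb := (isCharRoot_iff_of_ne ha hab').2 hquad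
  have hc := (isCharRoot_iff_of_ne ha hac').2 (by linear_combination hquad + (c - b) * hsum)
  exact ⟨_, _, a, ⟨ha, rfl⟩, b, ⟨hb, (exp_mul_eq_exp_mul_iff.2 ⟨m, hab⟩).symm⟩,
    c, ⟨hc, (exp_mul_eq_exp_mul_iff.2 ⟨m + n, hac⟩).symm⟩, hab', hac',
    (ne_iff_of_sub_mul_eq hL hbc).2 hn⟩

theorem mem_criticalN_iff_exists_three_resonantRoots (hL : 0 < L) :
    L ∈ criticalN ↔ ∃ lam μ, ∃ a ∈ resonantRoots lam μ L, ∃ b ∈ resonantRoots lam μ L,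
      ∃ c ∈ resonantRoots lam μ L, a ≠ b ∧ a ≠ c ∧ b ≠ c := by
  rw [mem_criticalN_iff hL.le]
  constructor
  · rintro ⟨m, n, hm, hn, hmn, hLmn⟩
    exact exists_three_resonantRoots_of_sq_eq hL.ne' hm hn hmn hLmn
  · rintro ⟨lam, μ, a, ⟨ha, haμ⟩, b, ⟨hb, hbμ⟩, c, ⟨hc, hcμ⟩, hab, hac, hbc⟩
    obtain ⟨m, hm⟩ := exp_mul_eq_exp_mul_iff.1 (haμ.trans hbμ.symm)
    obtain ⟨n, hn⟩ := exp_mul_eq_exp_mul_iff.1 (hbμ.trans hcμ.symm)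
    have hmn : (a - c) * L = (m + n : ℤ) * (2 * π * I) := by
      push_cast
      linear_combination hm + hn
    have hsum := add_add_eq_zero_of_isCharRoot ha hb hc hab hac hbc
    refine ⟨m, n, (ne_iff_of_sub_mul_eq hL.ne' hm).1 hab, (ne_iff_of_sub_mul_eq hL.ne' hn).1 hbc,
      (ne_iff_of_sub_mul_eq hL.ne' hmn).1 hac, ?_⟩
    exact (sq_add_mul_add_sq_add_one_eq_zero_iff hL.ne' (sq_add_mul_add_sq_mul_eq hsum hm hn)).1
      ((isCharRoot_iff_of_ne ha hab).1 hb)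

lemma exp_eq_I_iff {w : ℂ} : exp w = I ↔ ∃ k : ℤ, w = (1 / 2 + 2 * k) * (π * I) := by
  have hI : exp w = I ↔ exp w = exp (π / 2 * I) := by rw [Complex.exp_pi_div_two_mul_I]
  rw [hI, Complex.exp_eq_exp_iff_exists_int]
  ring_nf

lemma sq_add_mul_add_sq_mul_eq_of_mul_eq {k l : ℤ} (ha : a * L = (1 / 2 + 2 * k) * (π * I))
    (hb : b * L = (1 / 2 + 2 * l) * (π * I)) :
    (a ^ 2 + a * b + b ^ 2) * L ^ 2 = -(π ^ 2 * ((1 / 2 + 2 * (k : ℝ)) ^ 2 +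
      (1 / 2 + 2 * k) * (1 / 2 + 2 * l) + (1 / 2 + 2 * l) ^ 2) : ℝ) := by
  have hform : (a ^ 2 + a * b + b ^ 2) * L ^ 2 = (a * L) ^ 2 + a * L * (b * L) + (b * L) ^ 2 := by
    ring
  rw [hform, ha, hb]
  push_cast
  linear_combination π ^ 2 * ((1 / 2 + 2 * k) ^ 2 + (1 / 2 + 2 * k) * (1 / 2 + 2 * l) +
    (1 / 2 + 2 * l) ^ 2 : ℂ) * Complex.I_sq

lemma mem_criticalR_iff_exists_nontrivial_resonantRoots_I (hL : 0 < L) :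
    L ∈ criticalR ↔ ∃ lam, (resonantRoots lam I L).Nontrivial := by
  have hL' : (L : ℂ) ≠ 0 := Complex.ofReal_ne_zero.2 hL.ne'
  rw [mem_criticalR_iff hL.le]
  constructor
  · rintro ⟨k, l, hkl, hLkl⟩
    let root (j : ℤ) : ℂ := (1 / 2 + 2 * j) * (π * I) / L
    have hroot (j : ℤ) : root j * L = (1 / 2 + 2 * j) * (π * I) := div_mul_cancel₀ _ hL'
    have hne : root k ≠ root l := by
      simpa [root, hL', Real.pi_ne_zero] using hkl
    have hquad := (sq_add_mul_add_sq_add_one_eq_zero_iff hL.ne'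
      (sq_add_mul_add_sq_mul_eq_of_mul_eq (hroot k) (hroot l))).2 hLkl
    have hk : IsCharRoot (-(root k ^ 3 + root k)) (root k) := add_neg_cancel _
    exact ⟨_, _, ⟨hk, exp_eq_I_iff.2 ⟨k, hroot k⟩⟩, _,
      ⟨(isCharRoot_iff_of_ne hk hne).2 hquad, exp_eq_I_iff.2 ⟨l, hroot l⟩⟩, hne⟩
  · rintro ⟨lam, a, ⟨ha, haI⟩, b, ⟨hb, hbI⟩, hab⟩
    obtain ⟨k, hk⟩ := exp_eq_I_iff.1 haI
    obtain ⟨l, hl⟩ := exp_eq_I_iff.1 hbI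
    refine ⟨k, l, ?_, (sq_add_mul_add_sq_add_one_eq_zero_iff hL.ne'
      (sq_add_mul_add_sq_mul_eq_of_mul_eq hk hl)).1 ((isCharRoot_iff_of_ne ha hab).1 hb)⟩
    rintro rfl
    exact hab (mul_right_cancel₀ hL' (hk.trans hl.symm))

lemma neg_mem_resonantRoots {lam μ s : ℂ} (hs : s ∈ resonantRoots lam μ L) :
    -s ∈ resonantRoots (-lam) μ⁻¹ L := by
  obtain ⟨hroot, hexp⟩ := hs
  refine ⟨?_, by rw [neg_mul, Complex.exp_neg, hexp]⟩
  unfold IsCharRoot at *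
  linear_combination -hroot

theorem mem_criticalR_iff_exists_nontrivial_resonantRoots (hL : 0 < L) :
    L ∈ criticalR ↔ ∃ lam μ, μ ^ 2 = -1 ∧ (resonantRoots lam μ L).Nontrivial := by
  rw [mem_criticalR_iff_exists_nontrivial_resonantRoots_I hL]
  constructor
  · rintro ⟨lam, h⟩
    exact ⟨lam, I, Complex.I_sq, h⟩
  · rintro ⟨lam, μ, hμ, h⟩
    rcases sq_eq_sq_iff_eq_or_eq_neg.1 (hμ.trans Complex.I_sq.symm) with rfl | rfl
    · exact ⟨lam, h⟩
    · obtain ⟨a, ha, b, hb, hab⟩ := h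
      have hinv : (-I)⁻¹ = I := by rw [inv_neg, Complex.inv_I, neg_neg]
      exact ⟨-lam, -a, hinv ▸ neg_mem_resonantRoots ha, -b, hinv ▸ neg_mem_resonantRoots hb,
        neg_injective.ne hab⟩

end CriticalLengths

theorem statement_6 (L : ℝ) (hL : 0 < L) :
    (∃ (lam : ℂ) (θ u : ℝ → ℂ),
      ContDiff ℝ 3 θ ∧ ContDiff ℝ 3 u ∧
      ¬(∀ x ∈ Icc (0 : ℝ) L, θ x = 0 ∧ u x = 0) ∧
      (∀ x ∈ Icc (0 : ℝ) L, -deriv u x - deriv (deriv (deriv u)) x = lam * θ x) ∧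
      (∀ x ∈ Icc (0 : ℝ) L, -deriv θ x - deriv (deriv (deriv θ)) x = lam * u x) ∧
      θ 0 = 0 ∧ θ L = 0 ∧ deriv θ 0 = 0 ∧ deriv (deriv θ) L = 0 ∧
      u 0 = 0 ∧ u L = 0 ∧ deriv u L = 0) ↔ L ∈ criticalN ∪ criticalR := by
  trans ∃ lam θ u, IsBoussinesqMode lam L θ u
  · constructor
    · rintro ⟨lam, θ, u, hθ, hu, hne, hu₃, hθ₃, hbc⟩
      obtain ⟨hθ₀, hθL, hθ₁, hθ₂, hu₀, huL, hu₁⟩ := hbc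
      exact ⟨lam, θ, u, hθ, hu, hne, hu₃, hθ₃, hθ₀, hθL, hθ₁, hθ₂, hu₀, huL, hu₁⟩
    · rintro ⟨lam, θ, u, hθ, hu, hne, hu₃, hθ₃, hθ₀, hθL, hθ₁, hθ₂, hu₀, huL, hu₁⟩
      exact ⟨lam, θ, u, hθ, hu, hne, hu₃, hθ₃, hθ₀, hθL, hθ₁, hθ₂, hu₀, huL, hu₁⟩
  · rw [exists_isBoussinesqMode_iff hL, mem_union,
      mem_criticalN_iff_exists_three_resonantRoots hL,
      mem_criticalR_iff_exists_nontrivial_resonantRoots hL]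
    simp only [exists_isFloquetMode_deriv_eq_zero_iff hL, exists_isFloquetMode_iff hL]
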